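/- Entanglement of formation of the two-party reduced W state: let ψ⁺ = (1/√2)(|01⟩ + |10⟩) in ℂ²⊗ℂ² (indexed by Fin 2 × Fin 2), let e₀₀ be the basis vector |00⟩, and let ρ = (1/3)·e₀₀ e₀₀† + (2/3)·ψ⁺(ψ⁺)†. Then the entanglement of formation of ρ equals H₂((1 − √5/3)/2). -/

import Mathlib

open scoped ComplexConjugate ComplexOrder

/-- A density matrix: positive semidefinite with trace one. -/
def IsDensityMatrix {n : Type*} [Fintype n] (ρ : Matrix n n ℂ) : Prop :=
  ρ.PosSemidef ∧ ρ.trace = 1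

/-- The von Neumann entropy (in bits) of a (Hermitian) matrix:
`S(ρ) = −∑ᵢ λᵢ log₂ λᵢ` over the eigenvalues, with `0·log₂ 0 = 0`. -/
noncomputable def vnEntropy {n : Type*} [Fintype n] [DecidableEq n]
    (ρ : Matrix n n ℂ) : ℝ :=
  if h : ρ.IsHermitian then -∑ i, h.eigenvalues i * Real.logb 2 (h.eigenvalues i) else 0

/-- The trace norm of a Hermitian matrix: the sum of the absolute values of
its eigenvalues. -/
noncomputable def traceNorm {n : Type*} [Fintype n] [DecidableEq n]
    (M : Matrix n n ℂ) : ℝ :=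
  if h : M.IsHermitian then ∑ i, |h.eigenvalues i| else 0

/-- The entropy of entanglement of a bipartite pure-state vector:
the entropy of its reduced state on the first factor. -/
noncomputable def entE {A B : Type*} [Fintype A] [DecidableEq A] [Fintype B]
    (v : A × B → ℂ) : ℝ :=
  vnEntropy (Matrix.of fun x x' => ∑ y, v (x, y) * conj (v (x', y)))

/-- The entanglement of formation: infimum of the average pure-state entanglement
over all finite pure-state decompositions. -/
noncomputable def EoF {A B : Type*} [Fintype A] [DecidableEq A] [Fintype B]
    (ρ : Matrix (A × B) (A × B) ℂ) : ℝ :=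
  sInf {e : ℝ | ∃ (m : ℕ) (p : Fin m → ℝ) (v : Fin m → A × B → ℂ),
    (∀ i, 0 < p i) ∧ (∑ i, p i = 1) ∧ (∀ i, ∑ x, ‖v i x‖ ^ 2 = 1) ∧
    ρ = ∑ i, (p i : ℂ) • Matrix.of (fun x y => v i x * conj (v i y)) ∧
    e = ∑ i, p i * entE (v i)}

/-- The entanglement of assistance: supremum of the average pure-state entanglement
over all finite pure-state decompositions. -/
noncomputable def EoA {A B : Type*} [Fintype A] [DecidableEq A] [Fintype B]
    (ρ : Matrix (A × B) (A × B) ℂ) : ℝ :=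
  sSup {e : ℝ | ∃ (m : ℕ) (p : Fin m → ℝ) (v : Fin m → A × B → ℂ),
    (∀ i, 0 < p i) ∧ (∑ i, p i = 1) ∧ (∀ i, ∑ x, ‖v i x‖ ^ 2 = 1) ∧
    ρ = ∑ i, (p i : ℂ) • Matrix.of (fun x y => v i x * conj (v i y)) ∧
    e = ∑ i, p i * entE (v i)}

/-- The binary entropy `H₂(x) = −x log₂ x − (1−x) log₂ (1−x)`. -/
noncomputable def binEnt (x : ℝ) : ℝ :=
  -(x * Real.logb 2 x) - (1 - x) * Real.logb 2 (1 - x)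

/-- `ψ⁺ = (1/√2)(|01⟩ + |10⟩)`. -/
noncomputable def psiPlus : Fin 2 × Fin 2 → ℂ :=
  fun x => if x = (0, 1) ∨ x = (1, 0) then ((1 / Real.sqrt 2 : ℝ) : ℂ) else 0

/-- The basis vector `|00⟩`. -/
def e00 : Fin 2 × Fin 2 → ℂ :=
  fun x => if x = (0, 0) then 1 else 0

/-!
For a pure two-qubit state the reduced state has trace one and determinant `C² / 4`, where
`C = 2 |v₀₀ v₁₁ - v₀₁ v₁₀|` is the concurrence, so its entropy is `ℰ(C) = H₂((1 - √(1 - C²)) / 2)`.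
The function `ℰ` is increasing, and it is convex because `ℰ'(C)` is proportional to `u / sinh u`,
which decreases in `u`, while `u = artanh √(1 - C²)` decreases in `C`. By Jensen the average
entanglement of a decomposition is at least `ℰ` of its average concurrence, and the triangle and
Cauchy-Schwarz inequalities bound the latter below by `2 (|ρ₀₁,₁₀| - √(ρ₀₀,₀₀ ρ₁₁,₁₁))`. For
`ρ = (1 - t) |00⟩⟨00| + t ψ⁺(ψ⁺)†` this bound is `t`, and it is attained by the two superpositions
`√(1 - t) |00⟩ ± √t ψ⁺`, both of concurrence `t`.
-/

section BinaryEntropy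

lemma binEnt_eq_binEntropy_div_log_two (x : ℝ) : binEnt x = Real.binEntropy x / Real.log 2 := by
  simp only [binEnt, Real.binEntropy, Real.logb, Real.log_inv]
  ring

lemma binEnt_one_sub (x : ℝ) : binEnt (1 - x) = binEnt x := by
  simp only [binEnt_eq_binEntropy_div_log_two, Real.binEntropy_one_sub]

lemma binEnt_half_one_sub_abs (x : ℝ) : binEnt ((1 - |1 - 2 * x|) / 2) = binEnt x := by
  rcases abs_choice (1 - 2 * x) with h | h
  · rw [h]
    congr 1
    ring
  · rw [h, ← binEnt_one_sub x]
    congr 1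
    ring

lemma monotoneOn_binEnt : MonotoneOn binEnt (Set.Icc 0 2⁻¹) := fun x hx y hy hxy ↦ by
  simp only [binEnt_eq_binEntropy_div_log_two]
  exact div_le_div_of_nonneg_right (Real.binEntropy_strictMonoOn.monotoneOn hx hy hxy)
    (Real.log_nonneg one_le_two)

end BinaryEntropy

section EntanglementOfConcurrence

/-- Wootters' function `ℰ(C) = H₂((1 - √(1 - C²)) / 2)`, the entropy of entanglement of a pure
two-qubit state of concurrence `C`. It is only meaningful for `|C| ≤ 1`: beyond that the square
root takes its default value `0`. -/
noncomputable def entanglementOfConcurrence (C : ℝ) : ℝ := binEnt ((1 - √(1 - C ^ 2)) / 2)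

lemma convexOn_sinh : ConvexOn ℝ (Set.Ici 0) Real.sinh := by
  refine MonotoneOn.convexOn_of_deriv (convex_Ici 0) Real.continuous_sinh.continuousOn
    Real.differentiable_sinh.differentiableOn ?_
  rw [Real.deriv_sinh, interior_Ici]
  exact Real.cosh_strictMonoOn.monotoneOn.mono Set.Ioi_subset_Ici_self

lemma antitoneOn_div_sinh : AntitoneOn (fun u : ℝ ↦ u / Real.sinh u) (Set.Ioi 0) := by
  intro x (hx : 0 < x) y (hy : 0 < y) hxy
  have secant : Real.sinh x / x ≤ Real.sinh y / y := by
    simpa using convexOn_sinh.secant_mono (a := 0) Set.self_mem_Ici hx.le hy.le hx.ne' hy.ne' hxy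
  simpa only [inv_div] using
    inv_anti₀ (div_pos (Real.sinh_pos_iff.2 hx) hx) secant

lemma sqrt_one_sub_sq_mem_Ioo {C : ℝ} (hC : C ∈ Set.Ioo 0 1) : √(1 - C ^ 2) ∈ Set.Ioo 0 1 := by
  obtain ⟨h0, h1⟩ := hC
  exact ⟨Real.sqrt_pos.2 (by nlinarith), (Real.sqrt_lt' one_pos).2 (by nlinarith)⟩

lemma hasDerivAt_sqrt_one_sub_sq {C : ℝ} (hC : C ^ 2 < 1) :
    HasDerivAt (fun C : ℝ ↦ √(1 - C ^ 2)) (-C / √(1 - C ^ 2)) C := by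
  convert! ((hasDerivAt_pow 2 C).const_sub 1).sqrt (sub_pos.2 hC).ne' using 1
  field_simp
  norm_num [mul_comm]

lemma log_sub_log_eq_two_mul_artanh {s : ℝ} (hs : s ∈ Set.Ioo (-1) 1) :
    Real.log (1 - (1 - s) / 2) - Real.log ((1 - s) / 2) = 2 * Real.artanh s := by
  obtain ⟨h0, h1⟩ := hs
  rw [← Real.log_div (by linarith) (by linarith),
    Real.artanh_eq_half_log ⟨h0.le, h1.le⟩, ← mul_assoc, mul_one_div_cancel two_ne_zero,
    one_mul]
  congr 1
  field_simp
  ring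

lemma hasDerivAt_entanglementOfConcurrence {C : ℝ} (hC : C ∈ Set.Ioo 0 1) :
    HasDerivAt entanglementOfConcurrence
      (Real.artanh √(1 - C ^ 2) / Real.sinh (Real.artanh √(1 - C ^ 2)) / Real.log 2) C := by
  have hs := sqrt_one_sub_sq_mem_Ioo hC
  have hsinh : Real.sinh (Real.artanh √(1 - C ^ 2)) = √(1 - C ^ 2) / C := by
    rw [Real.sinh_artanh ⟨by linarith [hs.1], hs.2⟩,
      Real.sq_sqrt (Real.sqrt_pos.1 hs.1).le, sub_sub_cancel, Real.sqrt_sq hC.1.le]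
  have hsqrt := hasDerivAt_sqrt_one_sub_sq (sub_pos.1 (Real.sqrt_pos.1 hs.1))
  have hbin := Real.hasDerivAt_binEntropy (p := (1 - √(1 - C ^ 2)) / 2)
    (by linarith [hs.2]) (by linarith [hs.1])
  rw [log_sub_log_eq_two_mul_artanh ⟨by linarith [hs.1], hs.2⟩] at hbin
  have hcomp := (hbin.comp C ((hsqrt.const_sub 1).div_const 2)).div_const (Real.log 2)
  rw [hsinh]
  convert! hcomp using 1
  · exact funext fun C ↦ binEnt_eq_binEntropy_div_log_two _
  · field_simp

lemma continuous_entanglementOfConcurrence : Continuous entanglementOfConcurrence := by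
  have hbin : Continuous binEnt := by
    simpa only [funext binEnt_eq_binEntropy_div_log_two] using
      Real.binEntropy_continuous.div_const (Real.log 2)
  exact hbin.comp (by fun_prop)

lemma convexOn_entanglementOfConcurrence :
    ConvexOn ℝ (Set.Icc 0 1) entanglementOfConcurrence := by
  refine MonotoneOn.convexOn_of_deriv (convex_Icc 0 1)
    continuous_entanglementOfConcurrence.continuousOn ?_ ?_ <;> rw [interior_Icc]
  · exact fun C hC ↦
      (hasDerivAt_entanglementOfConcurrence hC).differentiableAt.differentiableWithinAt
  · intro C hC D hD hCD
    rw [(hasDerivAt_entanglementOfConcurrence hC).deriv,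
      (hasDerivAt_entanglementOfConcurrence hD).deriv]
    have hs := sqrt_one_sub_sq_mem_Ioo hC
    have hr := sqrt_one_sub_sq_mem_Ioo hD
    have hrs : √(1 - D ^ 2) ≤ √(1 - C ^ 2) :=
      Real.sqrt_le_sqrt (sub_le_sub_left (pow_le_pow_left₀ hC.1.le hCD 2) 1)
    have hartanh : Real.artanh √(1 - D ^ 2) ≤ Real.artanh √(1 - C ^ 2) :=
      Real.artanh_le_artanh (by linarith [hr.1]) hs.2 hrs
    exact div_le_div_of_nonneg_right
      (antitoneOn_div_sinh (Real.artanh_pos hr) (Real.artanh_pos hs) hartanh)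
      (Real.log_nonneg one_le_two)

lemma monotoneOn_entanglementOfConcurrence :
    MonotoneOn entanglementOfConcurrence (Set.Icc 0 1) := by
  have mem (C : ℝ) : (1 - √(1 - C ^ 2)) / 2 ∈ Set.Icc 0 2⁻¹ := by
    have hle : √(1 - C ^ 2) ≤ 1 := Real.sqrt_le_one.2 (by linarith [sq_nonneg C])
    constructor <;> linarith [Real.sqrt_nonneg (1 - C ^ 2)]
  intro C hC D _ hCD
  refine monotoneOn_binEnt (mem C) (mem D) ?_
  gcongr
  exact hC.1

end EntanglementOfConcurrence

section Concurrence

variable {A B : Type*}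

/-- The matrix of coefficients of a bipartite vector in the product basis. The entanglement
properties of the vector are read off from it: its reduced state is `X Xᴴ`. -/
def coeffMatrix (v : A × B → ℂ) : Matrix A B ℂ := Matrix.of fun a b ↦ v (a, b)

/-- The concurrence `2 |v₀₀ v₁₁ - v₀₁ v₁₀|` of a two-qubit vector. -/
noncomputable def concurrence (v : Fin 2 × Fin 2 → ℂ) : ℝ := 2 * ‖(coeffMatrix v).det‖

lemma concurrence_eq (v : Fin 2 × Fin 2 → ℂ) :
    concurrence v = 2 * ‖v (0, 0) * v (1, 1) - v (0, 1) * v (1, 0)‖ := by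
  rw [concurrence, Matrix.det_fin_two]
  rfl

lemma concurrence_nonneg (v : Fin 2 × Fin 2 → ℂ) : 0 ≤ concurrence v :=
  mul_nonneg zero_le_two (norm_nonneg _)

lemma concurrence_le_sum_norm_sq (v : Fin 2 × Fin 2 → ℂ) : concurrence v ≤ ∑ x, ‖v x‖ ^ 2 := by
  have triangle := norm_sub_le (v (0, 0) * v (1, 1)) (v (0, 1) * v (1, 0))
  simp only [norm_mul] at triangle
  rw [concurrence_eq, Fintype.sum_prod_type]
  simp only [Fin.sum_univ_two]
  linarith [two_mul_le_add_sq ‖v (0, 0)‖ ‖v (1, 1)‖, two_mul_le_add_sq ‖v (0, 1)‖ ‖v (1, 0)‖]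

lemma trace_coeffMatrix_mul_conjTranspose [Fintype A] [Fintype B] (v : A × B → ℂ) :
    (coeffMatrix v * (coeffMatrix v).conjTranspose).trace = ((∑ x, ‖v x‖ ^ 2 : ℝ) : ℂ) := by
  simp [Matrix.trace, Matrix.mul_apply, coeffMatrix, Fintype.sum_prod_type, Complex.mul_conj']

lemma det_coeffMatrix_mul_conjTranspose (v : Fin 2 × Fin 2 → ℂ) :
    (coeffMatrix v * (coeffMatrix v).conjTranspose).det = ((concurrence v ^ 2 / 4 : ℝ) : ℂ) := by
  rw [Matrix.det_mul, Matrix.det_conjTranspose, ← starRingEnd_apply, Complex.mul_conj', concurrence]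
  push_cast
  ring

lemma vnEntropy_eq_binEnt_of_trace_eq_one {M : Matrix (Fin 2) (Fin 2) ℂ} (hM : M.IsHermitian)
    (htr : M.trace = 1) : vnEntropy M = binEnt ((1 - √(1 - 4 * M.det.re)) / 2) := by
  set μ := hM.eigenvalues
  have hsum : μ 0 + μ 1 = 1 := by
    simpa [htr, Fin.sum_univ_two, eq_comm] using
      congrArg Complex.re hM.trace_eq_sum_eigenvalues
  have hprod : M.det.re = μ 0 * μ 1 := by
    simp [hM.det_eq_prod_eigenvalues, μ]
  have hμ : μ 1 = 1 - μ 0 := eq_sub_of_add_eq' hsum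
  have disc : 1 - 4 * M.det.re = (1 - 2 * μ 0) ^ 2 := by
    rw [hprod, hμ]
    ring
  rw [disc, Real.sqrt_sq_eq_abs, binEnt_half_one_sub_abs, vnEntropy, dif_pos hM,
    Fin.sum_univ_two]
  change -(μ 0 * Real.logb 2 (μ 0) + μ 1 * Real.logb 2 (μ 1)) = _
  rw [hμ, binEnt]
  ring

lemma entE_eq_entanglementOfConcurrence {v : Fin 2 × Fin 2 → ℂ} (hv : ∑ x, ‖v x‖ ^ 2 = 1) :
    entE v = entanglementOfConcurrence (concurrence v) := by
  have htr : (coeffMatrix v * (coeffMatrix v).conjTranspose).trace = 1 := by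
    rw [trace_coeffMatrix_mul_conjTranspose, hv, Complex.ofReal_one]
  calc entE v = vnEntropy (coeffMatrix v * (coeffMatrix v).conjTranspose) := rfl
    _ = entanglementOfConcurrence (concurrence v) := by
      rw [vnEntropy_eq_binEnt_of_trace_eq_one (Matrix.isHermitian_mul_conjTranspose_self _) htr,
        det_coeffMatrix_mul_conjTranspose, Complex.ofReal_re, mul_div_cancel₀ _ four_ne_zero,
        entanglementOfConcurrence]

end Concurrence

/-- The weights `p` and unit vectors `v` form a decomposition `ρ = ∑ pᵢ vᵢ vᵢ†` into pure states,
over which `EoF ρ` is the infimum of the average entanglement. -/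
structure IsPureDecomposition {n ι : Type*} [Fintype n] [Fintype ι] (ρ : Matrix n n ℂ)
    (p : ι → ℝ) (v : ι → n → ℂ) : Prop where
  pos : ∀ i, 0 < p i
  sum_eq_one : ∑ i, p i = 1
  sum_norm_sq : ∀ i, ∑ x, ‖v i x‖ ^ 2 = 1
  eq_sum : ρ = ∑ i, (p i : ℂ) • Matrix.of fun x y ↦ v i x * conj (v i y)

namespace IsPureDecomposition

section

variable {n ι : Type*} [Fintype n] [Fintype ι] {ρ : Matrix n n ℂ} {p : ι → ℝ} {v : ι → n → ℂ}

lemma apply (h : IsPureDecomposition ρ p v) (x y : n) :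
    ρ x y = ∑ i, (p i : ℂ) * (v i x * conj (v i y)) := by
  simp [h.eq_sum, Matrix.sum_apply]

lemma re_apply_self (h : IsPureDecomposition ρ p v) (x : n) :
    (ρ x x).re = ∑ i, p i * ‖v i x‖ ^ 2 := by
  rw [h.apply]
  simp only [Complex.mul_conj', Complex.re_sum, ← Complex.ofReal_pow, ← Complex.ofReal_mul,
    Complex.ofReal_re]

lemma norm_apply_le (h : IsPureDecomposition ρ p v) (x y : n) :
    ‖ρ x y‖ ≤ ∑ i, p i * (‖v i x‖ * ‖v i y‖) := by
  rw [h.apply]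
  refine norm_sum_le_of_le _ fun i _ ↦ le_of_eq ?_
  rw [norm_mul, norm_mul, RCLike.norm_conj, Complex.norm_of_nonneg (h.pos i).le]

lemma sum_norm_mul_norm_le (h : IsPureDecomposition ρ p v) (x y : n) :
    ∑ i, p i * (‖v i x‖ * ‖v i y‖) ≤ √(ρ x x).re * √(ρ y y).re := by
  have sqrt_weight (i : ι) (z : n) : √(p i * ‖v i z‖ ^ 2) = √(p i) * ‖v i z‖ := by
    rw [Real.sqrt_mul (h.pos i).le, Real.sqrt_sq (norm_nonneg _)]
  have nonneg (z : n) (i : ι) : 0 ≤ p i * ‖v i z‖ ^ 2 := mul_nonneg (h.pos i).le (sq_nonneg _)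
  calc ∑ i, p i * (‖v i x‖ * ‖v i y‖)
      = ∑ i, √(p i * ‖v i x‖ ^ 2) * √(p i * ‖v i y‖ ^ 2) := by
        refine Finset.sum_congr rfl fun i _ ↦ ?_
        rw [sqrt_weight, sqrt_weight, mul_mul_mul_comm, Real.mul_self_sqrt (h.pos i).le]
    _ ≤ √(∑ i, p i * ‖v i x‖ ^ 2) * √(∑ i, p i * ‖v i y‖ ^ 2) :=
        Real.sum_sqrt_mul_sqrt_le _ (nonneg x) (nonneg y)
    _ = √(ρ x x).re * √(ρ y y).re := by rw [h.re_apply_self, h.re_apply_self]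

end

section TwoQubit

variable {ι : Type*} [Fintype ι] {ρ : Matrix (Fin 2 × Fin 2) (Fin 2 × Fin 2) ℂ}
  {p : ι → ℝ} {v : ι → Fin 2 × Fin 2 → ℂ}

lemma two_mul_norm_sub_le_sum_concurrence (h : IsPureDecomposition ρ p v) :
    2 * (‖ρ (0, 1) (1, 0)‖ - √(ρ (0, 0) (0, 0)).re * √(ρ (1, 1) (1, 1)).re) ≤
      ∑ i, p i * concurrence (v i) := by
  have pointwise (i : ι) :
      2 * (p i * (‖v i (0, 1)‖ * ‖v i (1, 0)‖) - p i * (‖v i (0, 0)‖ * ‖v i (1, 1)‖)) ≤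
        p i * concurrence (v i) := by
    have triangle := norm_sub_norm_le (v i (0, 1) * v i (1, 0)) (v i (0, 0) * v i (1, 1))
    rw [norm_sub_rev, norm_mul, norm_mul] at triangle
    rw [concurrence_eq, ← mul_sub, mul_left_comm]
    exact mul_le_mul_of_nonneg_left (mul_le_mul_of_nonneg_left triangle zero_le_two) (h.pos i).le
  refine le_trans ?_ (Finset.sum_le_sum fun i _ ↦ pointwise i)
  rw [← Finset.mul_sum, Finset.sum_sub_distrib]
  gcongr
  · exact h.norm_apply_le _ _
  · exact h.sum_norm_mul_norm_le _ _

lemma concurrence_mem_Icc (h : IsPureDecomposition ρ p v) (i : ι) :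
    concurrence (v i) ∈ Set.Icc 0 1 :=
  ⟨concurrence_nonneg _, (concurrence_le_sum_norm_sq _).trans_eq (h.sum_norm_sq i)⟩

lemma entanglementOfConcurrence_le_sum_entE (h : IsPureDecomposition ρ p v) {c : ℝ} (hc : 0 ≤ c)
    (hle : c ≤ 2 * (‖ρ (0, 1) (1, 0)‖ - √(ρ (0, 0) (0, 0)).re * √(ρ (1, 1) (1, 1)).re)) :
    entanglementOfConcurrence c ≤ ∑ i, p i * entE (v i) := by
  have mean_mem : ∑ i, p i * concurrence (v i) ∈ Set.Icc (0 : ℝ) 1 :=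
    (convex_Icc 0 1).sum_mem (fun i _ ↦ (h.pos i).le) h.sum_eq_one
      fun i _ ↦ h.concurrence_mem_Icc i
  have c_le_mean : c ≤ ∑ i, p i * concurrence (v i) :=
    hle.trans h.two_mul_norm_sub_le_sum_concurrence
  calc entanglementOfConcurrence c
      ≤ entanglementOfConcurrence (∑ i, p i * concurrence (v i)) :=
        monotoneOn_entanglementOfConcurrence ⟨hc, c_le_mean.trans mean_mem.2⟩ mean_mem c_le_mean
    _ ≤ ∑ i, p i * entanglementOfConcurrence (concurrence (v i)) :=
        convexOn_entanglementOfConcurrence.map_sum_le (fun i _ ↦ (h.pos i).le) h.sum_eq_one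
          fun i _ ↦ h.concurrence_mem_Icc i
    _ = ∑ i, p i * entE (v i) := by
        simp only [entE_eq_entanglementOfConcurrence (h.sum_norm_sq _)]

lemma EoF_eq_entanglementOfConcurrence {m : ℕ} {p : Fin m → ℝ} {v : Fin m → Fin 2 × Fin 2 → ℂ}
    (h : IsPureDecomposition ρ p v) {c : ℝ} (hv : ∀ i, concurrence (v i) = c)
    (hle : c ≤ 2 * (‖ρ (0, 1) (1, 0)‖ - √(ρ (0, 0) (0, 0)).re * √(ρ (1, 1) (1, 1)).re)) :
    EoF ρ = entanglementOfConcurrence c := by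
  have hc : 0 ≤ c := by
    simpa only [hv, ← Finset.sum_mul, h.sum_eq_one, one_mul] using
      Finset.sum_nonneg (s := .univ)
        fun i _ ↦ mul_nonneg (h.pos i).le (concurrence_nonneg (v i))
  refine IsLeast.csInf_eq ⟨⟨m, p, v, h.pos, h.sum_eq_one, h.sum_norm_sq, h.eq_sum, ?_⟩, ?_⟩
  · simp only [entE_eq_entanglementOfConcurrence (h.sum_norm_sq _), hv, ← Finset.sum_mul,
      h.sum_eq_one, one_mul]
  · rintro _ ⟨k, q, w, hq, hsum, hw, hρ, rfl⟩
    exact entanglementOfConcurrence_le_sum_entE ⟨hq, hsum, hw, hρ⟩ hc hle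

end TwoQubit

end IsPureDecomposition

section Superposition

variable {n : Type*} [Fintype n] {u w : n → ℂ}

lemma sum_norm_sq_smul_add_smul (hu : ∑ x, ‖u x‖ ^ 2 = 1) (hw : ∑ x, ‖w x‖ ^ 2 = 1)
    (huw : u ⬝ᵥ star w = 0) (a b : ℝ) : ∑ x, ‖(a • u + b • w) x‖ ^ 2 = a ^ 2 + b ^ 2 := by
  have expand (x : n) : ‖(a • u + b • w) x‖ ^ 2 =
      a ^ 2 * ‖u x‖ ^ 2 + b ^ 2 * ‖w x‖ ^ 2 + 2 * (a * b) * (u x * star w x).re := by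
    simp only [Complex.sq_norm, Complex.normSq_apply, Pi.add_apply, Pi.smul_apply, Pi.star_apply,
      Complex.add_re, Complex.add_im, Complex.real_smul, Complex.mul_re, Complex.mul_im,
      Complex.ofReal_re, Complex.ofReal_im, RCLike.star_def, Complex.conj_re, Complex.conj_im]
    ring
  have cross : ∑ x, (u x * star w x).re = 0 := by
    rw [← Complex.re_sum, ← dotProduct, huw, Complex.zero_re]
  simp only [expand, Finset.sum_add_distrib, ← Finset.mul_sum, hu, hw, cross]
  ring

lemma isPureDecomposition_superpositions {a b : ℝ} (ha : 0 ≤ a) (hb : 0 ≤ b) (hab : a + b = 1)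
    (hu : ∑ x, ‖u x‖ ^ 2 = 1) (hw : ∑ x, ‖w x‖ ^ 2 = 1) (huw : u ⬝ᵥ star w = 0) :
    IsPureDecomposition
      ((a : ℂ) • Matrix.of (fun x y ↦ u x * conj (u y)) +
        (b : ℂ) • Matrix.of (fun x y ↦ w x * conj (w y)))
      (fun _ : Fin 2 ↦ 1 / 2) ![√a • u + √b • w, √a • u + (-√b) • w] where
  pos _ := one_half_pos
  sum_eq_one := by norm_num
  sum_norm_sq := by
    simp only [Fin.forall_fin_two, Matrix.cons_val_zero, Matrix.cons_val_one,
      sum_norm_sq_smul_add_smul hu hw huw, neg_sq, Real.sq_sqrt ha, Real.sq_sqrt hb, hab, and_self]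
  eq_sum := by
    have sq_a : (√a : ℂ) * √a = a := by rw [← Complex.ofReal_mul, Real.mul_self_sqrt ha]
    have sq_b : (√b : ℂ) * √b = b := by rw [← Complex.ofReal_mul, Real.mul_self_sqrt hb]
    ext x y
    simp only [Fin.sum_univ_two, Matrix.cons_val_zero, Matrix.cons_val_one, Matrix.add_apply,
      Matrix.smul_apply, Matrix.of_apply, smul_eq_mul, Pi.add_apply, Pi.smul_apply,
      Complex.real_smul, map_add, map_mul, Complex.conj_ofReal, Complex.ofReal_neg, map_neg,
      ← sq_a, ← sq_b]
    push_cast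
    ring

end Superposition

lemma sum_norm_sq_e00 : ∑ x, ‖e00 x‖ ^ 2 = 1 := by
  simp [Fintype.sum_prod_type, e00]

lemma sum_norm_sq_psiPlus : ∑ x, ‖psiPlus x‖ ^ 2 = 1 := by
  norm_num [Fintype.sum_prod_type, psiPlus]

lemma e00_dotProduct_star_psiPlus : e00 ⬝ᵥ star psiPlus = 0 := by
  simp [dotProduct, e00, psiPlus]

lemma one_div_sqrt_two_mul_self : ((1 / √2 : ℝ) : ℂ) * ((1 / √2 : ℝ) : ℂ) = 1 / 2 := by
  rw [← Complex.ofReal_mul, div_mul_div_comm, Real.mul_self_sqrt zero_le_two]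
  norm_num

lemma concurrence_smul_e00_add_smul_psiPlus (a b : ℝ) :
    concurrence (a • e00 + b • psiPlus) = b ^ 2 := by
  have det : (a • e00 + b • psiPlus) (0, 0) * (a • e00 + b • psiPlus) (1, 1) -
      (a • e00 + b • psiPlus) (0, 1) * (a • e00 + b • psiPlus) (1, 0) =
        ((-(b ^ 2 / 2) : ℝ) : ℂ) := by
    simp only [Pi.add_apply, Pi.smul_apply, e00, psiPlus, Complex.real_smul]
    simp only [Prod.mk.injEq, zero_ne_one, one_ne_zero, and_false, and_true, or_false,
      or_true, if_true, if_false, mul_zero, zero_add, add_zero, zero_sub, mul_mul_mul_comm,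
      one_div_sqrt_two_mul_self]
    push_cast
    ring
  rw [concurrence_eq, det, Complex.norm_real, norm_neg, Real.norm_of_nonneg (by positivity),
    mul_div_cancel₀ _ two_ne_zero]

theorem eof_reduced_W_general {t : ℝ} (ht : t ∈ Set.Icc 0 1) :
    EoF (((1 - t : ℝ) : ℂ) • Matrix.of (fun x y => e00 x * conj (e00 y))
       + (t : ℂ) • Matrix.of (fun x y => psiPlus x * conj (psiPlus y)))
      = binEnt ((1 - √(1 - t ^ 2)) / 2) := by
  refine (isPureDecomposition_superpositions (sub_nonneg.2 ht.2) ht.1 (sub_add_cancel 1 t)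
    sum_norm_sq_e00 sum_norm_sq_psiPlus
    e00_dotProduct_star_psiPlus).EoF_eq_entanglementOfConcurrence ?_ ?_
  · simp only [Fin.forall_fin_two, Matrix.cons_val_zero, Matrix.cons_val_one,
      concurrence_smul_e00_add_smul_psiPlus, neg_sq, Real.sq_sqrt ht.1, and_self]
  · have offDiag : psiPlus (0, 1) * conj (psiPlus (1, 0)) = 1 / 2 := by
      simpa only [psiPlus, or_true, true_or, if_true, Complex.conj_ofReal] using
        one_div_sqrt_two_mul_self
    have bound : t ≤ 2 * (|t| * 2⁻¹) := by rw [abs_of_nonneg ht.1]; linarith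
    simp only [Matrix.add_apply, Matrix.smul_apply, Matrix.of_apply, offDiag]
    simpa [e00, psiPlus] using bound

/-- the entanglement of formation of the two-party reduced W state
`ρ = (1/3)|00⟩⟨00| + (2/3)ψ⁺(ψ⁺)†` equals `H₂((1 − √5/3)/2)`. -/
theorem eof_reduced_W :
    EoF ((1/3 : ℂ) • Matrix.of (fun x y => e00 x * conj (e00 y))
       + (2/3 : ℂ) • Matrix.of (fun x y => psiPlus x * conj (psiPlus y)))
      = binEnt ((1 - Real.sqrt 5 / 3) / 2) := by
  have hsqrt : √(1 - (2 / 3 : ℝ) ^ 2) = √5 / 3 := by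
    rw [show 1 - (2 / 3 : ℝ) ^ 2 = 5 / 3 ^ 2 by norm_num, Real.sqrt_div' 5 (by norm_num),
      Real.sqrt_sq (by norm_num)]
  have h := eof_reduced_W_general (t := 2 / 3) (by norm_num)
  rw [hsqrt] at h
  convert h using 4 <;> norm_num
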